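/- Let k ≥ 2m be an even integer and define φ̃(ρ) := (1/(2π)) ∫_ℝ e^{-iρr} e^{-r^{k}} dr. Then for every R > 0, ∫_{-R}^{R} φ̃(ρ) ( ∫_{ℝ^N} e^{-xᵀKx} e^{iρ · P̃(x)^{1/k}} dx ) dρ = ∑_{n=0}^∞ (1/n!) ( ∫_{-R}^{R} φ̃(ρ) (iρ)^n dρ ) ( ∫_{ℝ^N} P̃(x)^{n/k} e^{-xᵀKx} dx ), where the series on the right converges absolutely; i.e. interchanging the expansion of e^{iρ·P̃(x)^{1/k}} with the integrations is justified. -/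

import Mathlib

open MeasureTheory Matrix

/-- The Fourier transform `φ̃(ρ) := (1/(2π)) ∫_ℝ e^{-iρr} e^{-r^k} dr`. -/
noncomputable def phiFT (k : ℕ) (ρ : ℝ) : ℂ :=
  (1 / (2 * Real.pi)) *
    ∫ r : ℝ, Complex.exp (-(Complex.I * (ρ : ℂ) * (r : ℂ))) * (Real.exp (-(r ^ k)) : ℂ)

/-!
Since `deg P ≤ k`, the function `X = P̃^{1/k}` grows at most linearly, so every exponential moment
of `|X|` under the measure `e^{-xᵀKx} dx` is finite. Dominated convergence with the majorant
`e^{t|X|}` expands `z ↦ ∫ e^{zX}` into its moment series on the disc `‖z‖ ≤ t`. The absolute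
convergence of that series at `z = t` is in turn the domination needed to integrate it termwise
against any integrable weight carried by a bounded set of frequencies.
-/

open ProbabilityTheory

section MomentSeries

variable {Ω : Type*} [MeasurableSpace Ω] {μ : Measure Ω} {X : Ω → ℝ} {t : ℝ}

theorem hasSum_complexMGF (hX : AEMeasurable X μ)
    (hexp : Integrable (fun ω => Real.exp (t * |X ω|)) μ) {z : ℂ} (hz : ‖z‖ ≤ t) :
    HasSum (fun n : ℕ => z ^ n / n.factorial * (moment X n μ : ℂ)) (complexMGF X μ z) := by
  have hseries (ω : Ω) : HasSum (fun n : ℕ => (t * |X ω|) ^ n / n.factorial)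
      (Real.exp (t * |X ω|)) := by
    simpa only [Real.exp_eq_exp_ℝ] using NormedSpace.expSeries_div_hasSum_exp (t * |X ω|)
  have h : HasSum (fun n : ℕ => ∫ ω, (z * X ω) ^ n / n.factorial ∂μ) (complexMGF X μ z) := by
    refine hasSum_integral_of_dominated_convergence
      (fun n ω => (t * |X ω|) ^ n / n.factorial) (fun n => ?_) (fun n => ?_) ?_ ?_ ?_
    · exact AEMeasurable.aestronglyMeasurable (by fun_prop)
    · refine .of_forall fun ω => ?_
      rw [norm_div, norm_pow, norm_mul, Complex.norm_real, Real.norm_eq_abs, Complex.norm_natCast]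
      gcongr
    · exact .of_forall fun ω => (hseries ω).summable
    · simpa only [(hseries _).tsum_eq] using hexp
    · refine .of_forall fun ω => ?_
      simpa only [Complex.exp_eq_exp_ℂ] using NormedSpace.expSeries_div_hasSum_exp (z * (X ω : ℂ))
  convert h using 2 with n
  simp only [mul_pow, mul_div_right_comm, integral_const_mul, moment, Pi.pow_apply,
    ← integral_complex_ofReal, Complex.ofReal_pow]

theorem hasSum_integral_mul_complexMGF {α : Type*} [MeasurableSpace α] {ν : Measure α}
    {φ ζ : α → ℂ} (hφ : Integrable φ ν) (hζ : AEStronglyMeasurable ζ ν) (ht : 0 ≤ t)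
    (hζt : ∀ᵐ a ∂ν, ‖ζ a‖ ≤ t) (hX : AEMeasurable X μ)
    (hexp : Integrable (fun ω => Real.exp (t * |X ω|)) μ) :
    HasSum (fun n : ℕ => 1 / (n.factorial : ℂ) * (∫ a, φ a * ζ a ^ n ∂ν) * (moment X n μ : ℂ))
      (∫ a, φ a * complexMGF X μ (ζ a) ∂ν) := by
  have habs : Summable fun n : ℕ => ‖(t : ℂ) ^ n / n.factorial * (moment X n μ : ℂ)‖ :=
    (hasSum_complexMGF hX hexp (by rw [Complex.norm_of_nonneg ht])).summable.norm
  have h : HasSum (fun n : ℕ => ∫ a, φ a * (ζ a ^ n / n.factorial * (moment X n μ : ℂ)) ∂ν)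
      (∫ a, φ a * complexMGF X μ (ζ a) ∂ν) := by
    refine hasSum_integral_of_dominated_convergence
      (fun n a => ‖φ a‖ * ‖(t : ℂ) ^ n / n.factorial * (moment X n μ : ℂ)‖)
      (fun n => ?_) (fun n => ?_) ?_ ?_ ?_
    · exact hφ.1.mul (by fun_prop)
    · filter_upwards [hζt] with a ha
      simp only [norm_mul, norm_div, norm_pow, Complex.norm_of_nonneg ht]
      gcongr
    · exact .of_forall fun a => habs.mul_left _
    · simpa only [tsum_mul_left] using hφ.norm.mul_const _
    · filter_upwards [hζt] with a ha
      exact (hasSum_complexMGF hX hexp ha).mul_left _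
  convert h using 2 with n
  rw [← integral_const_mul, ← integral_mul_const]
  congr 1 with a
  ring

theorem hasSum_intervalIntegral_mul_complexMGF {φ : ℝ → ℂ} {a b : ℝ}
    (hφ : IntervalIntegrable φ volume a b) (hX : AEMeasurable X μ)
    (hexp : Integrable (fun ω => Real.exp (max |a| |b| * |X ω|)) μ) :
    HasSum (fun n : ℕ => 1 / (n.factorial : ℂ) *
        (∫ ρ in a..b, φ ρ * (Complex.I * (ρ : ℂ)) ^ n) * (moment X n μ : ℂ))
      (∫ ρ in a..b, φ ρ * complexMGF X μ (Complex.I * (ρ : ℂ))) := by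
  have hbound : ∀ᵐ ρ : ℝ ∂volume.restrict (Set.uIoc a b), ‖Complex.I * (ρ : ℂ)‖ ≤ max |a| |b| := by
    filter_upwards [ae_restrict_mem measurableSet_uIoc] with ρ hρ
    rw [norm_mul, Complex.norm_I, one_mul, Complex.norm_real, Real.norm_eq_abs]
    obtain ⟨h₁, h₂⟩ | ⟨h₁, h₂⟩ := Set.mem_uIoc.mp hρ
    · exact abs_le_max_abs_abs h₁.le h₂
    · exact max_comm |b| |a| ▸ abs_le_max_abs_abs h₁.le h₂
  have h := hasSum_integral_mul_complexMGF hφ.def' (by fun_prop) (by positivity) hbound hX hexp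
  simp only [intervalIntegral.intervalIntegral_eq_integral_uIoc, mul_smul_comm, smul_mul_assoc]
  exact h.const_smul _

end MomentSeries

section GaussianIntegrability

variable {E : Type*} [NormedAddCommGroup E] [NormedSpace ℝ E] [FiniteDimensional ℝ E]
  [MeasurableSpace E] [BorelSpace E] {μ : Measure E} [μ.IsAddHaarMeasure]

theorem integrable_exp_neg_mul_norm_sq {c : ℝ} (hc : 0 < c) :
    Integrable (fun x : E => Real.exp (-c * ‖x‖ ^ 2)) μ := by
  cases subsingleton_or_nontrivial E
  · exact .of_finite
  · rw [integrable_fun_norm_addHaar μ (f := fun r => Real.exp (-c * r ^ 2))]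
    have hdim : (-1 : ℝ) < (Module.finrank ℝ E - 1 : ℕ) := neg_one_lt_zero.trans_le (by positivity)
    simpa only [Real.rpow_natCast, smul_eq_mul] using integrableOn_rpow_mul_exp_neg_mul_sq hc hdim

theorem integrable_exp_sub_of_le_of_mul_norm_sq_le {f q : E → ℝ} {c D : ℝ}
    (hf : AEMeasurable f μ) (hq : AEMeasurable q μ) (hc : 0 < c)
    (hfD : ∀ x, f x ≤ D * (1 + ‖x‖)) (hqc : ∀ x, c * ‖x‖ ^ 2 ≤ q x) :
    Integrable (fun x => Real.exp (f x - q x)) μ := by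
  refine ((integrable_exp_neg_mul_norm_sq (half_pos hc)).const_mul
    (Real.exp (D + D ^ 2 / (2 * c)))).mono' (by fun_prop) (.of_forall fun x => ?_)
  have young : D * ‖x‖ ≤ c / 2 * ‖x‖ ^ 2 + D ^ 2 / (2 * c) := by
    have hsq : c / 2 * ‖x‖ ^ 2 + D ^ 2 / (2 * c) - D * ‖x‖ = (c * ‖x‖ - D) ^ 2 / (2 * c) := by
      field_simp
      ring
    have : 0 ≤ (c * ‖x‖ - D) ^ 2 / (2 * c) := by positivity
    linarith
  rw [Real.norm_eq_abs, Real.abs_exp, ← Real.exp_add, Real.exp_le_exp]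
  linarith [hfD x, hqc x]

end GaussianIntegrability

section Growth

theorem rpow_one_div_le_mul_of_le_mul_rpow {u v C s : ℝ} (hu : 0 ≤ u) (hv : 0 < v) (hs : 0 < s)
    (h : u ≤ C * v ^ s) : u ^ (1 / s) ≤ C ^ (1 / s) * v := by
  have hC : 0 ≤ C := nonneg_of_mul_nonneg_left (hu.trans h) (by positivity)
  calc u ^ (1 / s) ≤ (C * v ^ s) ^ (1 / s) := by gcongr
    _ = C ^ (1 / s) * v := by
      rw [Real.mul_rpow hC (by positivity), one_div, Real.rpow_rpow_inv hv.le hs.ne']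

variable {ι : Type*} [Fintype ι]

theorem exists_pos_forall_mul_norm_sq_le_of_posDef {K : Matrix ι ι ℝ} (hK : K.PosDef) :
    ∃ c : ℝ, 0 < c ∧ ∀ x : ι → ℝ, c * ‖x‖ ^ 2 ≤ x ⬝ᵥ K *ᵥ x := by
  have hpos : ∀ x ∈ Metric.sphere (0 : ι → ℝ) 1, 0 < x ⬝ᵥ K *ᵥ x := fun x hx => by
    simpa using hK.dotProduct_mulVec_pos (ne_zero_of_mem_unit_sphere ⟨x, hx⟩)
  obtain ⟨c, hc, hle⟩ := (isCompact_sphere (0 : ι → ℝ) 1).exists_forall_le'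
    (f := fun x => x ⬝ᵥ K *ᵥ x) (by fun_prop) hpos
  refine ⟨c, hc, fun x => ?_⟩
  obtain rfl | hx := eq_or_ne x 0
  · simp
  have hx' : ‖x‖ ≠ 0 := norm_ne_zero_iff.mpr hx
  have hunit : c ≤ (‖x‖⁻¹ • x) ⬝ᵥ K *ᵥ (‖x‖⁻¹ • x) := hle _ (by simp [norm_smul, hx'])
  calc c * ‖x‖ ^ 2 ≤ ((‖x‖⁻¹ • x) ⬝ᵥ K *ᵥ (‖x‖⁻¹ • x)) * ‖x‖ ^ 2 := by gcongr
    _ = x ⬝ᵥ K *ᵥ x := by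
      simp only [mulVec_smul, smul_dotProduct, dotProduct_smul, smul_eq_mul]
      field_simp

theorem exists_forall_abs_eval_le (p : MvPolynomial ι ℝ) :
    ∃ C : ℝ, 0 ≤ C ∧ ∀ x : ι → ℝ, |MvPolynomial.eval x p| ≤ C * (1 + ‖x‖) ^ p.totalDegree := by
  refine ⟨∑ d ∈ p.support, |p.coeff d|, by positivity, fun x => ?_⟩
  have hmonomial (d : ι →₀ ℕ) (hd : d ∈ p.support) :
      |∏ i, x i ^ d i| ≤ (1 + ‖x‖) ^ p.totalDegree :=
    calc |∏ i, x i ^ d i| = ∏ i, |x i| ^ d i := by simp only [Finset.abs_prod, abs_pow]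
      _ ≤ ∏ i, (1 + ‖x‖) ^ d i := by
        gcongr with i
        exact (norm_le_pi_norm x i).trans (le_add_of_nonneg_left zero_le_one)
      _ = (1 + ‖x‖) ^ d.degree := by rw [Finset.prod_pow_eq_pow_sum, Finsupp.degree_eq_sum]
      _ ≤ (1 + ‖x‖) ^ p.totalDegree := by
        gcongr
        · exact le_add_of_nonneg_right (norm_nonneg x)
        · exact MvPolynomial.le_totalDegree hd
  rw [MvPolynomial.eval_eq', Finset.sum_mul]
  refine (Finset.abs_sum_le_sum_abs _ _).trans (Finset.sum_le_sum fun d hd => ?_)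
  rw [abs_mul]
  gcongr
  exact hmonomial d hd

theorem exists_forall_eval_add_le_mul_rpow (p : MvPolynomial ι ℝ) (M : ℝ) {s : ℝ}
    (hdeg : p.totalDegree ≤ s) :
    ∃ C : ℝ, ∀ x : ι → ℝ, MvPolynomial.eval x p + M ≤ C * (1 + ‖x‖) ^ s := by
  obtain ⟨C, hC, hp⟩ := exists_forall_abs_eval_le p
  refine ⟨C + |M|, fun x => ?_⟩
  have hx : 1 ≤ 1 + ‖x‖ := le_add_of_nonneg_right (norm_nonneg x)
  have hs : 0 ≤ s := (Nat.cast_nonneg _).trans hdeg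
  calc MvPolynomial.eval x p + M ≤ C * (1 + ‖x‖) ^ p.totalDegree + |M| :=
        add_le_add ((le_abs_self _).trans (hp x)) (le_abs_self M)
    _ = C * (1 + ‖x‖) ^ (p.totalDegree : ℝ) + |M| * 1 := by rw [Real.rpow_natCast, mul_one]
    _ ≤ C * (1 + ‖x‖) ^ s + |M| * (1 + ‖x‖) ^ s := by
        gcongr
        exact Real.one_le_rpow hx hs
    _ = (C + |M|) * (1 + ‖x‖) ^ s := (add_mul _ _ _).symm

end Growth

section QuadraticWeight

variable {ι : Type*} [Fintype ι] (K : Matrix ι ι ℝ)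

/-- The unnormalised Gaussian measure `e^{-xᵀKx} dx` on `ℝ^ι`; working with it turns the integrals
over `x` into moments and moment generating functions. -/
noncomputable def quadraticWeight : Measure (ι → ℝ) :=
  volume.withDensity fun x => ENNReal.ofReal (Real.exp (-(x ⬝ᵥ K *ᵥ x)))

theorem integral_quadraticWeight {F : Type*} [NormedAddCommGroup F] [NormedSpace ℝ F]
    (f : (ι → ℝ) → F) :
    ∫ x, f x ∂quadraticWeight K = ∫ x : ι → ℝ, Real.exp (-(x ⬝ᵥ K *ᵥ x)) • f x := by
  rw [quadraticWeight, integral_withDensity_eq_integral_toReal_smul (by fun_prop) (by simp)]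
  simp only [ENNReal.toReal_ofReal (Real.exp_nonneg _)]

theorem integrable_quadraticWeight_iff {f : (ι → ℝ) → ℝ} :
    Integrable f (quadraticWeight K) ↔
      Integrable fun x : ι → ℝ => f x * Real.exp (-(x ⬝ᵥ K *ᵥ x)) := by
  rw [quadraticWeight, integrable_withDensity_iff (by fun_prop) (by simp)]
  simp only [ENNReal.toReal_ofReal (Real.exp_nonneg _)]

variable {K} in
theorem integrable_exp_mul_abs_quadraticWeight (hK : K.PosDef) {X : (ι → ℝ) → ℝ}
    (hX : Measurable X) {D : ℝ} (hXD : ∀ x, |X x| ≤ D * (1 + ‖x‖)) (t : ℝ) :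
    Integrable (fun x => Real.exp (t * |X x|)) (quadraticWeight K) := by
  obtain ⟨c, hc, hKc⟩ := exists_pos_forall_mul_norm_sq_le_of_posDef hK
  have hgrowth (x : ι → ℝ) : t * |X x| ≤ |t| * D * (1 + ‖x‖) :=
    calc t * |X x| ≤ |t| * (D * (1 + ‖x‖)) := by gcongr; exacts [le_abs_self t, hXD x]
      _ = |t| * D * (1 + ‖x‖) := (mul_assoc _ _ _).symm
  simp only [integrable_quadraticWeight_iff, ← Real.exp_add, ← sub_eq_add_neg]
  exact integrable_exp_sub_of_le_of_mul_norm_sq_le (by fun_prop) (by fun_prop) hc hgrowth hKc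

theorem complexMGF_quadraticWeight (X : (ι → ℝ) → ℝ) (z : ℂ) :
    complexMGF X (quadraticWeight K) z =
      ∫ x : ι → ℝ, Complex.exp (-((x ⬝ᵥ K *ᵥ x : ℝ) : ℂ)) * Complex.exp (z * (X x : ℂ)) := by
  simp only [complexMGF, integral_quadraticWeight, Complex.real_smul, Complex.ofReal_exp,
    Complex.ofReal_neg]

theorem moment_rpow_one_div_quadraticWeight {f : (ι → ℝ) → ℝ} (hf : ∀ x, 0 ≤ f x) (s : ℝ) (n : ℕ) :
    moment (fun x => f x ^ (1 / s)) n (quadraticWeight K) =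
      ∫ x : ι → ℝ, f x ^ ((n : ℝ) / s) * Real.exp (-(x ⬝ᵥ K *ᵥ x)) := by
  simp only [moment, integral_quadraticWeight, Pi.pow_apply, smul_eq_mul,
    ← Real.rpow_mul_natCast (hf _), one_div_mul_eq_div, mul_comm (Real.exp _)]

end QuadraticWeight

section FourierTransform

theorem norm_phiFT_le (k : ℕ) (ρ : ℝ) :
    ‖phiFT k ρ‖ ≤ ‖(1 / (2 * Real.pi) : ℂ)‖ * ∫ r : ℝ, Real.exp (-(r ^ k)) := by
  rw [phiFT, norm_mul]
  gcongr
  refine (norm_integral_le_integral_norm _).trans_eq (integral_congr_ae (.of_forall fun r => ?_))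
  simp only [norm_mul, Complex.norm_exp, Complex.norm_of_nonneg (Real.exp_nonneg _)]
  simp

theorem stronglyMeasurable_phiFT (k : ℕ) : StronglyMeasurable (phiFT k) := by
  have hcont : Continuous fun z : ℝ × ℝ =>
      Complex.exp (-(Complex.I * (z.1 : ℂ) * (z.2 : ℂ))) * (Real.exp (-(z.2 ^ k)) : ℂ) := by
    fun_prop
  exact hcont.stronglyMeasurable.integral_prod_right.const_mul _

theorem intervalIntegrable_phiFT (k : ℕ) (a b : ℝ) : IntervalIntegrable (phiFT k) volume a b :=
  intervalIntegrable_const.mono_fun' (stronglyMeasurable_phiFT k).aestronglyMeasurable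
    (.of_forall (norm_phiFT_le k))

end FourierTransform

theorem stmt14_general {ι : Type*} [Fintype ι] {f : (ι → ℝ) → ℝ}
    (hf : Measurable f) (hf0 : ∀ x, 0 ≤ f x) {k C : ℝ} (hk : 0 < k)
    (hfC : ∀ x, f x ≤ C * (1 + ‖x‖) ^ k) {K : Matrix ι ι ℝ} (hK : K.PosDef)
    {φ : ℝ → ℂ} {a b : ℝ} (hφ : IntervalIntegrable φ volume a b) :
    (∫ ρ in a..b, φ ρ *
        ∫ x : ι → ℝ, Complex.exp (-((x ⬝ᵥ K *ᵥ x : ℝ) : ℂ)) *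
          Complex.exp (Complex.I * (ρ : ℂ) * ((f x ^ (1 / k) : ℝ) : ℂ))) =
      (∑' n : ℕ, (1 / (n.factorial : ℂ)) *
        (∫ ρ in a..b, φ ρ * (Complex.I * (ρ : ℂ)) ^ n) *
        ((∫ x : ι → ℝ, f x ^ ((n : ℝ) / k) *
            Real.exp (-(x ⬝ᵥ K *ᵥ x)) : ℝ) : ℂ)) ∧
      Summable (fun n : ℕ => ‖(1 / (n.factorial : ℂ)) *
        (∫ ρ in a..b, φ ρ * (Complex.I * (ρ : ℂ)) ^ n) *
        ((∫ x : ι → ℝ, f x ^ ((n : ℝ) / k) *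
            Real.exp (-(x ⬝ᵥ K *ᵥ x)) : ℝ) : ℂ)‖) := by
  have hroot (x : ι → ℝ) : |f x ^ (1 / k)| ≤ C ^ (1 / k) * (1 + ‖x‖) := by
    rw [abs_of_nonneg (Real.rpow_nonneg (hf0 x) _)]
    exact rpow_one_div_le_mul_of_le_mul_rpow (hf0 x) (by positivity) hk (hfC x)
  have h := hasSum_intervalIntegral_mul_complexMGF hφ (hf.pow_const (1 / k)).aemeasurable
    (integrable_exp_mul_abs_quadraticWeight hK (hf.pow_const _) hroot _)
  simp only [complexMGF_quadraticWeight, moment_rpow_one_div_quadraticWeight K hf0] at h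
  exact ⟨h.tsum_eq.symm, h.summable.norm⟩

theorem stmt14 (N m : ℕ) (hN : 0 < N) (hm : 0 < m)
    (p : MvPolynomial (Fin N) ℝ) (hdeg : p.totalDegree = 2 * m)
    (M : ℝ) (hM : 0 ≤ M) (hPbound : ∀ x : Fin N → ℝ, -M ≤ MvPolynomial.eval x p)
    (K : Matrix (Fin N) (Fin N) ℝ) (hK : K.PosDef)
    (k : ℕ) (hk : 2 * m ≤ k) (hkeven : Even k) (R : ℝ) (hR : 0 < R) :
    (∫ ρ in (-R)..R, phiFT k ρ *
        ∫ x : Fin N → ℝ, Complex.exp (-((x ⬝ᵥ K *ᵥ x : ℝ) : ℂ)) *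
          Complex.exp (Complex.I * (ρ : ℂ) *
            (((MvPolynomial.eval x p + M) ^ ((1 : ℝ) / k) : ℝ) : ℂ))) =
      (∑' n : ℕ, (1 / (n.factorial : ℂ)) *
        (∫ ρ in (-R)..R, phiFT k ρ * (Complex.I * (ρ : ℂ)) ^ n) *
        ((∫ x : Fin N → ℝ,
          (MvPolynomial.eval x p + M) ^ ((n : ℝ) / k) *
            Real.exp (-(x ⬝ᵥ K *ᵥ x)) : ℝ) : ℂ)) ∧
      Summable (fun n : ℕ => ‖(1 / (n.factorial : ℂ)) *
        (∫ ρ in (-R)..R, phiFT k ρ * (Complex.I * (ρ : ℂ)) ^ n) *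
        ((∫ x : Fin N → ℝ,
          (MvPolynomial.eval x p + M) ^ ((n : ℝ) / k) *
            Real.exp (-(x ⬝ᵥ K *ᵥ x)) : ℝ) : ℂ)‖) := by
  obtain ⟨C, hC⟩ := exists_forall_eval_add_le_mul_rpow p M (s := k) (by exact_mod_cast hdeg ▸ hk)
  exact stmt14_general ((MvPolynomial.continuous_eval p).measurable.add_const M)
    (fun x => neg_le_iff_add_nonneg.mp (hPbound x)) (Nat.cast_pos.mpr (by omega)) hC hK
    (intervalIntegrable_phiFT k (-R) R)
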